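/- (Convergence of the discretised minimisation programs.) Under Assumption (A) and with the notation and hypotheses of the previous discretisation (measures μ_i, cones U_n, closure U_∞, values p_{2,n} for n ∈ ℕ ∪ {∞}, optimisers μ*_{2,n}, and C > 0 with C·μ_1 feasible): (b) there exist a strictly increasing sequence (n_k) of natural numbers and a measure ν_∞ ∈ U_∞ with r_{ν_∞}(t,b(t)) ≥ 1 for all t ∈ (0,t0], such that μ*_{2,n_k} → ν_∞ vaguely and p_{2,∞} ≤ ∫ g dν_∞ ≤ inf_{n∈ℕ} p_{2,n} = lim_{n→∞} p_{2,n}; (c) if in addition there is a sequence (ξ_n) with ξ_n ∈ U_n and sup_n ξ_n([2b(0),∞)) < ∞ converging vaguely to a measure μ*_∞ attaining p_{2,∞}, and lim_{n→∞} sup_{t ∈ (0,t0]} | r_{μ*_∞}(t,b(t)) − r_{ξ_n}(t,b(t)) | / r_{μ_1}(t,b(t)) = 0, then ν_∞ attains p_{2,∞} and p_{2,∞} = ∫ g dν_∞ = inf_{n∈ℕ} p_{2,n} = lim_{n→∞} p_{2,n}. -/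

import Mathlib

open MeasureTheory Set Filter
open scoped ENNReal NNReal Topology

noncomputable def rTheta (θ t x : ℝ) : ℝ := Real.exp (-θ ^ 2 / (2 * t) + θ * x / t)

noncomputable def rMu (μ : Measure ℝ) (t x : ℝ) : ℝ≥0∞ :=
  ∫⁻ θ, ENNReal.ofReal (rTheta θ t x) ∂μ

/-- The positive cone `U_n` generated by the measures `μ_1 = μs 0, …, μ_n = μs (n-1)`. -/
def coneU (μs : ℕ → Measure ℝ) (n : ℕ) : Set (Measure ℝ) :=
  {μ | ∃ a : ℕ → ℝ≥0, μ = ∑ i ∈ Finset.range n, a i • μs i}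

/-- The vague topology on measures on `ℝ`: the coarsest topology making
`μ ↦ ∫ f dμ` continuous for every continuous compactly supported `f`. -/
noncomputable def vagueTop : TopologicalSpace (Measure ℝ) :=
  ⨅ (f : ℝ → ℝ) (_ : Continuous f) (_ : HasCompactSupport f),
    TopologicalSpace.induced (fun μ : Measure ℝ => ∫ x, f x ∂μ) inferInstance

/-- `U_∞`: the vague closure of `⋃ n, U_n`. -/
noncomputable def coneUInf (μs : ℕ → Measure ℝ) : Set (Measure ℝ) :=
  @closure _ vagueTop (⋃ n, coneU μs n)

/-- Feasible measures of the minimisation program restricted to `U`. -/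
def feasSet (b : ℝ → ℝ) (t0 : ℝ) (U : Set (Measure ℝ)) : Set (Measure ℝ) :=
  {μ ∈ U | ∀ t ∈ Set.Ioc 0 t0, 1 ≤ rMu μ t (b t)}

/-- The objective `∫ g dμ` with `g θ = r_θ(t0, x0)`. -/
noncomputable def gInt (t0 x0 : ℝ) (μ : Measure ℝ) : ℝ≥0∞ :=
  ∫⁻ θ, ENNReal.ofReal (rTheta θ t0 x0) ∂μ

/-- The optimal value `p_{2,·}` of the minimisation program restricted to `U`. -/
noncomputable def pVal (b : ℝ → ℝ) (t0 x0 : ℝ) (U : Set (Measure ℝ)) : ℝ≥0∞ :=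
  ⨅ μ ∈ feasSet b t0 U, gInt t0 x0 μ

/-- Vague convergence of a sequence of measures on `ℝ`. -/
def VagueTendsto (μn : ℕ → Measure ℝ) (μ : Measure ℝ) : Prop :=
  ∀ f : ℝ → ℝ, Continuous f → HasCompactSupport f →
    Tendsto (fun n => ∫ x, f x ∂(μn n)) atTop (𝓝 (∫ x, f x ∂μ))

/-!
The optimisers `μ*_n` have bounded `g`-integrals, so the finite measures `(1 + |θ|)⁻¹ g · μ*_n` are
tight and a subsequence of `μ*_n` converges vaguely to some `ν`. For `t < t0` the function
`θ ↦ r_θ(t, b t)` is `o(g)` at infinity, so no boundary mass is lost in the limit and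
`r_ν(t, b t) ≥ 1`. At `t = t0` this argument fails. There one completes the square, which gives
`r_ν(t, b t) ≤ exp((b t / t - b t0 / t0)² / (2 (1/t - 1/t0))) · r_ν(t0, b t0)`, and the exponent
tends to `0` as `t ↑ t0` because `b` is differentiable at `t0`. Lower semicontinuity of `∫ g` bounds
`∫ g dν` by the limit of the values.

For (c), adding `ε_n μ_1` to `ξ_n`, where `ε_n → 0` is the relative gap along the boundary, makes
it feasible. Its cost tends to `∫ g dμ*_∞`, since the masses of `ξ_n` are bounded and `g` vanishes
at infinity.
-/

section FiniteMeasure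

open Topology TopologicalSpace

variable {E : Type*} [MeasurableSpace E] [TopologicalSpace E] [OpensMeasurableSpace E]

theorem tendsto_finiteMeasure_add_const_iff {ι : Type*} {F : Filter ι} {ms : ι → FiniteMeasure E}
    {m ρ : FiniteMeasure E} :
    Tendsto (fun i => ms i + ρ) F (𝓝 (m + ρ)) ↔ Tendsto ms F (𝓝 m) := by
  simp only [FiniteMeasure.tendsto_iff_forall_integral_tendsto, FiniteMeasure.toMeasure_add,
    integral_add_measure (BoundedContinuousFunction.integrable _ _)
      (BoundedContinuousFunction.integrable _ _), tendsto_add_const_iff]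

variable [Nonempty E]

/-- The shape and the mass of `m + ρ`. For `ρ ≠ 0` this realises the space of finite measures as a
subspace of `ProbabilityMeasure E × ℝ≥0`: adding `ρ` avoids the zero measure, where normalization
is not continuous. -/
noncomputable def normalizeAddProdMass (ρ m : FiniteMeasure E) : ProbabilityMeasure E × ℝ≥0 :=
  ((m + ρ).normalize, (m + ρ).mass)

theorem isInducing_normalizeAddProdMass {ρ : FiniteMeasure E} (hρ : ρ ≠ 0) :
    IsInducing (normalizeAddProdMass ρ) := by
  refine isInducing_iff_nhds.2 fun m => eq_of_forall_le_iff fun F => ?_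
  have add_ne_zero : m + ρ ≠ 0 := fun h => hρ <| by
    have mass_add : (m + ρ).mass = m.mass + ρ.mass := by
      simp only [FiniteMeasure.mass, FiniteMeasure.coeFn_add, Pi.add_apply]
    rw [← FiniteMeasure.mass_zero_iff] at h ⊢
    exact (add_eq_zero.1 (mass_add.symm.trans h)).2
  rw [← tendsto_iff_comap, ← tendsto_id', ← tendsto_finiteMeasure_add_const_iff (ρ := ρ),
    ← FiniteMeasure.tendsto_normalize_iff_tendsto add_ne_zero]
  exact (Prod.tendsto_iff (normalizeAddProdMass ρ) (normalizeAddProdMass ρ m)).symm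

theorem pseudoMetrizableSpace_finiteMeasure [PseudoMetrizableSpace E] [SeparableSpace E] :
    PseudoMetrizableSpace (FiniteMeasure E) := by
  let δ : FiniteMeasure E := ⟨Measure.dirac (Classical.arbitrary E), inferInstance⟩
  have dirac_ne_zero : δ ≠ 0 := fun h =>
    IsProbabilityMeasure.ne_zero (Measure.dirac (Classical.arbitrary E)) (congrArg Subtype.val h)
  exact (isInducing_normalizeAddProdMass dirac_ne_zero).pseudoMetrizableSpace

end FiniteMeasure

theorem exists_subseq_tendsto_of_lintegral_one_add_nnnorm_le {E : Type*} [NormedAddCommGroup E]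
    [ProperSpace E] [MeasurableSpace E] [BorelSpace E] {m : ℕ → FiniteMeasure E} {K : ℝ≥0}
    (hK : ∀ n, ∫⁻ x, ↑(1 + ‖x‖₊) ∂(m n : Measure E) ≤ K) :
    ∃ (φ : ℕ → ℕ) (m' : FiniteMeasure E), StrictMono φ ∧ Tendsto (m ∘ φ) atTop (𝓝 m') := by
  have meas_le (n : ℕ) (r : ℝ≥0) : m n {x | r ≤ ‖x‖₊} ≤ K / (1 + r) := by
    have markov := mul_meas_ge_le_lintegral (μ := (m n : Measure E))
      (f := fun x => ↑(1 + ‖x‖₊)) (by fun_prop) ↑(1 + r)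
    simp only [ENNReal.coe_le_coe, add_le_add_iff_left,
      ← FiniteMeasure.ennreal_coeFn_eq_coeFn_toMeasure, ← ENNReal.coe_mul] at markov
    exact (le_div_iff₀' (by positivity)).2 (ENNReal.coe_le_coe.1 (markov.trans (hK n)))
  have mass_le (n : ℕ) : (m n).mass ≤ K := by
    simpa only [zero_le, ofPred_true, add_zero, div_one, FiniteMeasure.mass] using meas_le n 0
  have tail_le (n k : ℕ) : m n (Metric.closedBall 0 k)ᶜ ≤ K / (1 + k) :=
    (FiniteMeasure.apply_mono _ fun x hx => by
      simpa [← NNReal.coe_le_coe] using (not_le.1 (mt mem_closedBall_zero_iff.2 hx)).le).trans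
      (meas_le n k)
  have tail_tendsto : Tendsto (fun k : ℕ => K / (1 + k)) atTop (𝓝 0) := by
    simpa only [Function.comp_def, Nat.cast_add_one, add_comm] using
      (tendsto_const_div_atTop_nhds_zero_nat K).comp (tendsto_add_atTop_nat 1)
  have := pseudoMetrizableSpace_finiteMeasure (E := E)
  have compact := isCompact_setOfPred_finiteMeasure_mass_le_compl_isCompact_le K tail_tendsto
    (fun k : ℕ => isCompact_closedBall (0 : E) k) (.inl inferInstance)
  obtain ⟨m', -, φ, hφ, hlim⟩ := compact.tendsto_subseq fun n => ⟨mass_le n, tail_le n⟩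
  exact ⟨φ, m', hφ, hlim⟩

theorem vagueTendsto_withDensity {ms : ℕ → FiniteMeasure ℝ} {m : FiniteMeasure ℝ}
    (hms : Tendsto ms atTop (𝓝 m)) {w : ℝ → ℝ≥0} (hw : Continuous w) :
    VagueTendsto (fun n => (ms n : Measure ℝ).withDensity fun x => w x)
      ((m : Measure ℝ).withDensity fun x => w x) := by
  intro f hf hfc
  obtain ⟨F, hF⟩ : ∃ F : BoundedContinuousFunction ℝ ℝ, ⇑F = fun x => w x • f x := by
    have h := hw.smul hf
    obtain ⟨C, hC⟩ := hfc.smul_left (f := w) |>.exists_bound_of_continuous h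
    exact ⟨.ofNormedAddCommGroup _ h C hC, rfl⟩
  simpa only [integral_withDensity_eq_integral_smul hw.measurable, hF] using
    FiniteMeasure.tendsto_iff_forall_integral_tendsto.1 hms F

theorem exists_subseq_vagueTendsto {μ : ℕ → Measure ℝ} {V : ℝ → ℝ≥0} (hV : Continuous V)
    (hpos : ∀ x, 0 < V x) {K : ℝ≥0} (hK : ∀ n, ∫⁻ x, V x ∂μ n ≤ K) :
    ∃ (φ : ℕ → ℕ) (ν : Measure ℝ), StrictMono φ ∧ IsLocallyFiniteMeasure ν ∧
      VagueTendsto (μ ∘ φ) ν := by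
  -- The factor `(1 + |x|)⁻¹` turns the bound on the `V`-integrals into tightness.
  set w : ℝ → ℝ≥0 := fun x => (1 + ‖x‖₊)⁻¹ * V x
  have w_pos (x : ℝ) : 0 < w x := mul_pos (by positivity) (hpos x)
  have w_cont : Continuous w := by
    refine .mul (.inv₀ (by fun_prop) fun x => ?_) hV
    positivity
  have lintegral_le (n : ℕ) : ∫⁻ x, ↑(1 + ‖x‖₊) ∂(μ n).withDensity (fun x => w x) ≤ K := by
    rw [lintegral_withDensity_eq_lintegral_mul _ (by fun_prop) (by fun_prop)]
    refine (lintegral_congr fun x => ?_).trans_le (hK n)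
    rw [Pi.mul_apply, ← ENNReal.coe_mul, mul_comm, mul_inv_cancel_left₀ (by positivity)]
  have finite (n : ℕ) : IsFiniteMeasure ((μ n).withDensity fun x => w x) := by
    refine isFiniteMeasure_withDensity (ne_top_of_le_ne_top ENNReal.coe_ne_top
      ((lintegral_mono fun x => ?_).trans (hK n)))
    exact ENNReal.coe_le_coe.2 (mul_le_of_le_one_left' (inv_le_one_of_one_le₀ le_self_add))
  obtain ⟨φ, m, hφ, hlim⟩ := exists_subseq_tendsto_of_lintegral_one_add_nnnorm_le
    (m := fun n => ⟨_, finite n⟩) lintegral_le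
  have w_inv_cont : Continuous fun x => (w x)⁻¹ := w_cont.inv₀ fun x => (w_pos x).ne'
  have recover : μ ∘ φ = fun n =>
      ((μ (φ n)).withDensity fun x => w x).withDensity fun x => ↑(w x)⁻¹ := funext fun n => by
    simpa only [ENNReal.coe_inv (w_pos _).ne', Function.comp_apply] using
      (withDensity_inv_same (μ := μ (φ n)) (f := fun x => w x) (by fun_prop)
        (by simp [(w_pos _).ne']) (by simp)).symm
  exact ⟨φ, _, hφ, IsLocallyFiniteMeasure.withDensity_coe w_inv_cont,
    recover ▸ vagueTendsto_withDensity hlim w_inv_cont⟩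

section VagueConvergence

theorem lintegral_lt_top_of_hasCompactSupport {ν : Measure ℝ} [IsFiniteMeasureOnCompacts ν]
    {f : ℝ → ℝ≥0} (hf : Continuous f) (hfc : HasCompactSupport f) : ∫⁻ x, f x ∂ν < ⊤ := by
  simpa using ((NNReal.continuous_coe.comp hf).integrable_of_hasCompactSupport
    (hfc.comp_left NNReal.coe_zero) (μ := ν)).lintegral_lt_top

theorem hasCompactSupport_tsub_mul_of_isLittleO {f w : ℝ → ℝ≥0}
    (hfw : (fun x => (f x : ℝ)) =o[cocompact ℝ] fun x => (w x : ℝ)) {δ : ℝ≥0} (hδ : 0 < δ) :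
    HasCompactSupport fun x => f x - δ * w x := by
  rw [hasCompactSupport_iff_eventuallyEq, coclosedCompact_eq_cocompact]
  filter_upwards [hfw.def (NNReal.coe_pos.2 hδ)] with x hx
  refine tsub_eq_zero_of_le (NNReal.coe_le_coe.1 ?_)
  simpa using hx

namespace VagueTendsto

variable {μ : ℕ → Measure ℝ} {ν : Measure ℝ} {f w : ℝ → ℝ≥0}

theorem tendsto_toReal_lintegral (h : VagueTendsto μ ν) (hf : Continuous f)
    (hfc : HasCompactSupport f) :
    Tendsto (fun n => (∫⁻ x, f x ∂μ n).toReal) atTop (𝓝 (∫⁻ x, f x ∂ν).toReal) := by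
  have integral_eq (ρ : Measure ℝ) : ∫ x, (f x : ℝ) ∂ρ = (∫⁻ x, f x ∂ρ).toReal := by
    simpa only [ENNReal.ofReal_coe_nnreal] using integral_eq_lintegral_of_nonneg_ae
      (.of_forall fun x => (f x).coe_nonneg) (NNReal.continuous_coe.comp hf).aestronglyMeasurable
  have lim := h _ (NNReal.continuous_coe.comp hf) (hfc.comp_left NNReal.coe_zero)
  simpa only [Function.comp_def, integral_eq] using lim

theorem limsup_lintegral_le_of_hasCompactSupport [∀ n, IsFiniteMeasureOnCompacts (μ n)]
    (h : VagueTendsto μ ν) (hf : Continuous f) (hfc : HasCompactSupport f) :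
    limsup (fun n => ∫⁻ x, f x ∂μ n) atTop ≤ ∫⁻ x, f x ∂ν := by
  have lim := ENNReal.tendsto_ofReal (h.tendsto_toReal_lintegral hf hfc)
  simp only [ENNReal.ofReal_toReal (lintegral_lt_top_of_hasCompactSupport hf hfc).ne] at lim
  exact lim.limsup_eq.trans_le ENNReal.ofReal_toReal_le

theorem lintegral_le_liminf_of_hasCompactSupport [IsFiniteMeasureOnCompacts ν]
    (h : VagueTendsto μ ν) (hf : Continuous f) (hfc : HasCompactSupport f) :
    ∫⁻ x, f x ∂ν ≤ liminf (fun n => ∫⁻ x, f x ∂μ n) atTop := by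
  have lim := ENNReal.tendsto_ofReal (h.tendsto_toReal_lintegral hf hfc)
  rw [ENNReal.ofReal_toReal (lintegral_lt_top_of_hasCompactSupport hf hfc).ne] at lim
  exact lim.liminf_eq.ge.trans (liminf_le_liminf (.of_forall fun n => ENNReal.ofReal_toReal_le))

theorem lintegral_le_liminf [IsFiniteMeasureOnCompacts ν] (h : VagueTendsto μ ν)
    (hf : Continuous f) :
    ∫⁻ x, f x ∂ν ≤ liminf (fun n => ∫⁻ x, f x ∂μ n) atTop := by
  let χ (k : ℕ) (x : ℝ) : ℝ≥0 := min 1 (k + 1 - ‖x‖₊)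
  have χ_compact (k : ℕ) : HasCompactSupport (χ k) := by
    refine .intro (isCompact_closedBall (0 : ℝ) (k + 1)) fun x hx => ?_
    have : (k + 1 : ℝ≥0) ≤ ‖x‖₊ := NNReal.coe_le_coe.1 <| by
      simpa using (not_le.1 (mt mem_closedBall_zero_iff.2 hx)).le
    simp only [χ, tsub_eq_zero_of_le this, zero_le, inf_of_le_right]
  have χ_tendsto (x : ℝ) : Tendsto (fun k => (↑(χ k x * f x) : ℝ≥0∞)) atTop (𝓝 (f x)) := by
    refine tendsto_const_nhds.congr' ?_
    filter_upwards [eventually_ge_atTop ⌈‖x‖₊⌉₊] with k hk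
    have : (1 : ℝ≥0) ≤ k + 1 - ‖x‖₊ := le_tsub_of_add_le_left (by gcongr; exact Nat.ceil_le.1 hk)
    simp only [χ, min_eq_left this, one_mul]
  have lintegral_cutoff_le (k : ℕ) :
      ∫⁻ x, ↑(χ k x * f x) ∂ν ≤ liminf (fun n => ∫⁻ x, f x ∂μ n) atTop :=
    (h.lintegral_le_liminf_of_hasCompactSupport (by fun_prop) (χ_compact k).mul_right).trans <|
      liminf_le_liminf <| .of_forall fun n => lintegral_mono fun x =>
        ENNReal.coe_le_coe.2 (mul_le_of_le_one_left' (min_le_left _ _))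
  calc ∫⁻ x, f x ∂ν
      = ∫⁻ x, liminf (fun k => (↑(χ k x * f x) : ℝ≥0∞)) atTop ∂ν :=
        lintegral_congr fun x => (χ_tendsto x).liminf_eq.symm
    _ ≤ liminf (fun k => ∫⁻ x, ↑(χ k x * f x) ∂ν) atTop := lintegral_liminf_le fun k => by fun_prop
    _ ≤ liminf (fun n => ∫⁻ x, f x ∂μ n) atTop :=
        (liminf_le_liminf (.of_forall lintegral_cutoff_le)).trans_eq (liminf_const _)

theorem limsup_lintegral_le_of_isLittleO [∀ n, IsFiniteMeasureOnCompacts (μ n)]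
    (h : VagueTendsto μ ν) (hf : Continuous f) (hw : Continuous w)
    (hfw : (fun x => (f x : ℝ)) =o[cocompact ℝ] fun x => (w x : ℝ))
    {K : ℝ≥0∞} (hK : K ≠ ⊤) (hμK : ∀ n, ∫⁻ x, w x ∂μ n ≤ K) :
    limsup (fun n => ∫⁻ x, f x ∂μ n) atTop ≤ ∫⁻ x, f x ∂ν := by
  have lintegral_le (δ : ℝ≥0) (n : ℕ) :
      ∫⁻ x, f x ∂μ n ≤ ∫⁻ x, ↑(f x - δ * w x) ∂μ n + δ * K := by
    have coe_le (x : ℝ) : (f x : ℝ≥0∞) ≤ ↑(f x - δ * w x) + δ * w x := mod_cast le_tsub_add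
    calc ∫⁻ x, f x ∂μ n ≤ ∫⁻ x, ↑(f x - δ * w x) + δ * w x ∂μ n :=
          lintegral_mono coe_le
      _ = ∫⁻ x, ↑(f x - δ * w x) ∂μ n + δ * ∫⁻ x, w x ∂μ n := by
          rw [lintegral_add_left (by fun_prop), lintegral_const_mul _ (by fun_prop)]
      _ ≤ ∫⁻ x, ↑(f x - δ * w x) ∂μ n + δ * K := by grw [hμK n]
  have limsup_le {δ : ℝ≥0} (hδ : 0 < δ) :
      limsup (fun n => ∫⁻ x, f x ∂μ n) atTop ≤ ∫⁻ x, f x ∂ν + δ * K := by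
    calc limsup (fun n => ∫⁻ x, f x ∂μ n) atTop
        ≤ limsup (fun n => ∫⁻ x, ↑(f x - δ * w x) ∂μ n) atTop + δ * K := by
          rw [← limsup_add_const _ _ _ (by isBoundedDefault) (by isBoundedDefault)]
          exact limsup_le_limsup (.of_forall (lintegral_le δ))
      _ ≤ ∫⁻ x, ↑(f x - δ * w x) ∂ν + δ * K := by
          grw [h.limsup_lintegral_le_of_hasCompactSupport (by fun_prop)
            (hasCompactSupport_tsub_mul_of_isLittleO hfw hδ)]
      _ ≤ ∫⁻ x, f x ∂ν + δ * K := by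
          gcongr
          exact tsub_le_self
  have lim : Tendsto (fun δ : ℝ≥0 => ∫⁻ x, f x ∂ν + δ * K) (𝓝[>] 0) (𝓝 (∫⁻ x, f x ∂ν)) := by
    have mul_tendsto := ENNReal.Tendsto.mul_const (ENNReal.tendsto_coe.2 (tendsto_id (x := 𝓝 0)))
      (.inr hK)
    simpa using (tendsto_const_nhds.add mul_tendsto).mono_left nhdsWithin_le_nhds
  exact ge_of_tendsto lim (eventually_mem_nhdsWithin.mono fun δ hδ => limsup_le hδ)

end VagueTendsto

end VagueConvergence

section Kernel

variable {t t0 x y : ℝ}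

theorem neg_mul_sq_add_mul_le {a : ℝ} (ha : 0 < a) (c θ : ℝ) :
    -a * θ ^ 2 + c * θ ≤ c ^ 2 / (4 * a) := by
  rw [le_div_iff₀ (by positivity)]
  linarith [sq_nonneg (2 * a * θ - c)]

theorem tendsto_exp_neg_mul_sq_add_mul_cocompact {a : ℝ} (ha : 0 < a) (c : ℝ) :
    Tendsto (fun θ => Real.exp (-a * θ ^ 2 + c * θ)) (cocompact ℝ) (𝓝 0) := by
  have isLittleO := cexp_neg_quadratic_isLittleO_abs_rpow_cocompact (a := (-a : ℝ))
    (by simpa using ha) c 0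
  simpa only [Real.rpow_zero, Asymptotics.isLittleO_one_iff, ← Complex.ofReal_pow,
    ← Complex.ofReal_mul, ← Complex.ofReal_add, ← Complex.ofReal_exp,
    ← Complex.ofReal_zero, Filter.tendsto_ofReal_iff] using isLittleO

theorem rTheta_pos (θ t x : ℝ) : 0 < rTheta θ t x := Real.exp_pos _

theorem continuous_rTheta (t x : ℝ) : Continuous fun θ => rTheta θ t x := by
  unfold rTheta
  fun_prop

theorem rTheta_eq_exp (θ t x : ℝ) : rTheta θ t x = Real.exp (-(t⁻¹ / 2) * θ ^ 2 + x / t * θ) := by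
  rw [rTheta]
  ring_nf

theorem rTheta_eq_exp_mul_rTheta (θ t x t0 y : ℝ) :
    rTheta θ t x =
      Real.exp (-((t⁻¹ - t0⁻¹) / 2) * θ ^ 2 + (x / t - y / t0) * θ) * rTheta θ t0 y := by
  rw [rTheta, rTheta, ← Real.exp_add]
  ring_nf

theorem rTheta_isLittleO_one (ht : 0 < t) (x : ℝ) :
    (fun θ => rTheta θ t x) =o[cocompact ℝ] fun _ => (1 : ℝ) := by
  simpa only [Asymptotics.isLittleO_one_iff, rTheta_eq_exp] using
    tendsto_exp_neg_mul_sq_add_mul_cocompact (by positivity) (x / t)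

theorem rTheta_isLittleO_rTheta (ht : 0 < t) (htt0 : t < t0) (x y : ℝ) :
    (fun θ => rTheta θ t x) =o[cocompact ℝ] fun θ => rTheta θ t0 y :=
  Asymptotics.isLittleO_iff_exists_eq_mul.2
    ⟨_, tendsto_exp_neg_mul_sq_add_mul_cocompact (half_pos (sub_pos.2 (inv_strictAnti₀ ht htt0))) _,
      .of_forall fun θ => rTheta_eq_exp_mul_rTheta θ t x t0 y⟩

theorem rTheta_le (ht : 0 < t) (θ x : ℝ) : rTheta θ t x ≤ Real.exp (x ^ 2 / (2 * t)) := by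
  rw [rTheta_eq_exp, Real.exp_le_exp]
  refine (neg_mul_sq_add_mul_le (by positivity) _ _).trans_eq ?_
  field_simp
  norm_num

theorem rTheta_le_exp_mul_rTheta (ht : 0 < t) (htt0 : t < t0) (θ x y : ℝ) :
    rTheta θ t x ≤
      Real.exp ((x / t - y / t0) ^ 2 / (2 * (t⁻¹ - t0⁻¹))) * rTheta θ t0 y := by
  have coeff_pos := half_pos (sub_pos.2 (inv_strictAnti₀ ht htt0))
  have quadratic_le := neg_mul_sq_add_mul_le coeff_pos (x / t - y / t0) θ
  rw [rTheta_eq_exp_mul_rTheta θ t x t0 y]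
  gcongr
  · exact (rTheta_pos _ _ _).le
  · refine quadratic_le.trans_eq ?_
    congr 1
    ring

theorem rMu_lt_top (μ : Measure ℝ) [IsFiniteMeasure μ] (ht : 0 < t) (x : ℝ) : rMu μ t x < ⊤ := by
  calc rMu μ t x ≤ ∫⁻ _, ENNReal.ofReal (Real.exp (x ^ 2 / (2 * t))) ∂μ := by
        refine lintegral_mono fun θ => ?_
        gcongr
        exact rTheta_le ht θ x
    _ < ⊤ := by simp [ENNReal.mul_lt_top_iff]

theorem rMu_le_exp_mul_rMu (μ : Measure ℝ) (ht : 0 < t) (htt0 : t < t0) (x y : ℝ) :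
    rMu μ t x ≤
      ENNReal.ofReal (Real.exp ((x / t - y / t0) ^ 2 / (2 * (t⁻¹ - t0⁻¹)))) * rMu μ t0 y := by
  rw [rMu, rMu, ← lintegral_const_mul _ (continuous_rTheta t0 y).measurable.ennreal_ofReal]
  refine lintegral_mono fun θ => ?_
  rw [← ENNReal.ofReal_mul (Real.exp_nonneg _)]
  gcongr
  exact rTheta_le_exp_mul_rTheta ht htt0 θ x y

end Kernel

section Endpoint

theorem tendsto_sq_div_inv_sub_inv {b : ℝ → ℝ} {t0 : ℝ} (ht0 : t0 ≠ 0)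
    (hb : DifferentiableWithinAt ℝ b (Iio t0) t0) :
    Tendsto (fun t => (b t / t - b t0 / t0) ^ 2 / (2 * (t⁻¹ - t0⁻¹))) (𝓝[<] t0) (𝓝 0) := by
  have quotient_slope := (hasDerivWithinAt_iff_tendsto_slope' self_notMem_Iio).1
    (hb.div differentiableWithinAt_id ht0).hasDerivWithinAt
  have inv_slope := (hasDerivWithinAt_iff_tendsto_slope' self_notMem_Iio).1
    (hasDerivAt_inv ht0).hasDerivWithinAt
  have sub_tendsto : Tendsto (fun t => t - t0) (𝓝[<] t0) (𝓝 0) :=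
    tendsto_nhdsWithin_of_tendsto_nhds (Continuous.tendsto' (by fun_prop) _ _ (sub_self t0))
  have lim := ((quotient_slope.pow 2).div (inv_slope.const_mul 2) (by simpa)).mul sub_tendsto
  rw [mul_zero] at lim
  refine lim.congr' ?_
  filter_upwards [self_mem_nhdsWithin] with t ht
  have : t - t0 ≠ 0 := (sub_neg.2 ht).ne
  simp only [slope_def_field, Pi.div_apply, id]
  field_simp

theorem le_rMu_of_forall_Ioo {b : ℝ → ℝ} {t0 : ℝ} (ht0 : 0 < t0)
    (hb : DifferentiableWithinAt ℝ b (Iio t0) t0) {μ : Measure ℝ} {c : ℝ≥0∞}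
    (h : ∀ t ∈ Ioo 0 t0, c ≤ rMu μ t (b t)) : c ≤ rMu μ t0 (b t0) := by
  have lim := ENNReal.Tendsto.mul_const (b := rMu μ t0 (b t0)) (ENNReal.tendsto_ofReal
    ((Real.continuous_exp.tendsto 0).comp (tendsto_sq_div_inv_sub_inv ht0.ne' hb))) (by simp)
  rw [Real.exp_zero, ENNReal.ofReal_one, one_mul] at lim
  refine ge_of_tendsto lim ?_
  filter_upwards [Ioo_mem_nhdsLT ht0] with t ht
  exact (h t ht).trans (rMu_le_exp_mul_rMu μ ht.1 ht.2 _ _)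

end Endpoint

section Limits

variable {μ : ℕ → Measure ℝ} {ν : Measure ℝ} {t t0 x0 : ℝ}

theorem continuous_toNNReal_rTheta (t x : ℝ) : Continuous fun θ => (rTheta θ t x).toNNReal :=
  continuous_real_toNNReal.comp (continuous_rTheta t x)

theorem coe_toNNReal_rTheta (θ t x : ℝ) : ((rTheta θ t x).toNNReal : ℝ) = rTheta θ t x :=
  Real.coe_toNNReal _ (rTheta_pos θ t x).le

theorem exists_subseq_vagueTendsto_of_gInt_le {K : ℝ≥0∞} (hK : K ≠ ⊤)
    (hμ : ∀ n, gInt t0 x0 (μ n) ≤ K) :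
    ∃ (φ : ℕ → ℕ) (ν : Measure ℝ), StrictMono φ ∧ IsLocallyFiniteMeasure ν ∧
      VagueTendsto (μ ∘ φ) ν := by
  lift K to ℝ≥0 using hK
  exact exists_subseq_vagueTendsto (continuous_toNNReal_rTheta t0 x0)
    (fun θ => Real.toNNReal_pos.2 (rTheta_pos θ t0 x0)) hμ

namespace VagueTendsto

theorem gInt_le_liminf [IsLocallyFiniteMeasure ν] (h : VagueTendsto μ ν) (t0 x0 : ℝ) :
    gInt t0 x0 ν ≤ liminf (fun n => gInt t0 x0 (μ n)) atTop :=
  h.lintegral_le_liminf (continuous_toNNReal_rTheta t0 x0)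

theorem limsup_rMu_le_of_gInt_le [∀ n, IsFiniteMeasureOnCompacts (μ n)] (h : VagueTendsto μ ν)
    {K : ℝ≥0∞} (hK : K ≠ ⊤) (hμ : ∀ n, gInt t0 x0 (μ n) ≤ K) (ht : 0 < t) (htt0 : t < t0)
    (x : ℝ) : limsup (fun n => rMu (μ n) t x) atTop ≤ rMu ν t x := by
  refine h.limsup_lintegral_le_of_isLittleO (continuous_toNNReal_rTheta t x)
    (continuous_toNNReal_rTheta t0 x0) ?_ hK hμ
  simpa only [coe_toNNReal_rTheta] using rTheta_isLittleO_rTheta ht htt0 x x0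

theorem limsup_rMu_le_of_measure_univ_le [∀ n, IsFiniteMeasureOnCompacts (μ n)]
    (h : VagueTendsto μ ν) {K : ℝ≥0∞} (hK : K ≠ ⊤) (hμ : ∀ n, μ n univ ≤ K) (ht : 0 < t)
    (x : ℝ) : limsup (fun n => rMu (μ n) t x) atTop ≤ rMu ν t x := by
  refine h.limsup_lintegral_le_of_isLittleO (w := 1) (continuous_toNNReal_rTheta t x)
    continuous_const ?_ hK (by simpa using hμ)
  simpa only [coe_toNNReal_rTheta, Pi.one_apply, NNReal.coe_one] using rTheta_isLittleO_one ht x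

theorem one_le_rMu {b : ℝ → ℝ} (ht0 : 0 < t0) (hb : DifferentiableWithinAt ℝ b (Iio t0) t0)
    [∀ n, IsFiniteMeasureOnCompacts (μ n)] (h : VagueTendsto μ ν) {K : ℝ≥0∞} (hK : K ≠ ⊤)
    (hμ : ∀ n, gInt t0 x0 (μ n) ≤ K) (hfeas : ∀ n, ∀ t ∈ Ioc 0 t0, 1 ≤ rMu (μ n) t (b t)) :
    ∀ t ∈ Ioc 0 t0, 1 ≤ rMu ν t (b t) := by
  have one_le_of_lt : ∀ t ∈ Ioo 0 t0, 1 ≤ rMu ν t (b t) := fun t ht =>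
    calc 1 ≤ limsup (fun n => rMu (μ n) t (b t)) atTop :=
          le_limsup_of_frequently_le (.of_forall fun n => hfeas n t (Ioo_subset_Ioc_self ht))
      _ ≤ rMu ν t (b t) := h.limsup_rMu_le_of_gInt_le hK hμ ht.1 ht.2 (b t)
  rintro t ⟨ht, htt0⟩
  rcases htt0.lt_or_eq with htt0 | rfl
  · exact one_le_of_lt t ⟨ht, htt0⟩
  · exact le_rMu_of_forall_Ioo ht0 hb one_le_of_lt

end VagueTendsto

end Limits

section Cones

variable {μs : ℕ → Measure ℝ} {μ ν : Measure ℝ} {n : ℕ}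

theorem coneU_eq_span (μs : ℕ → Measure ℝ) (n : ℕ) :
    coneU μs n = Submodule.span ℝ≥0 (μs '' Finset.range n) := by
  ext μ
  simp only [coneU, mem_ofPred_eq, SetLike.mem_coe,
    Submodule.mem_span_image_finset_iff_exists_fun', eq_comm]

theorem coneU_mono (μs : ℕ → Measure ℝ) : Monotone (coneU μs) := fun m n hmn => by
  simp only [coneU_eq_span]
  exact Submodule.span_mono (image_mono (Finset.coe_subset.2 (Finset.range_mono hmn)))

theorem add_mem_coneU (hμ : μ ∈ coneU μs n) (hν : ν ∈ coneU μs n) : μ + ν ∈ coneU μs n := by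
  rw [coneU_eq_span] at *
  exact add_mem hμ hν

theorem smul_mem_coneU {i : ℕ} (hi : i < n) (c : ℝ≥0) : c • μs i ∈ coneU μs n := by
  rw [coneU_eq_span]
  exact Submodule.smul_mem _ c (Submodule.subset_span ⟨i, by simpa using hi, rfl⟩)

theorem isFiniteMeasure_of_mem_coneU [∀ i, IsFiniteMeasure (μs i)] (hμ : μ ∈ coneU μs n) :
    IsFiniteMeasure μ := by
  obtain ⟨a, rfl⟩ := hμ
  infer_instance

theorem measure_univ_eq_of_mem_coneU {s : Set ℝ} (hs : ∀ i, μs i sᶜ = 0) (hμ : μ ∈ coneU μs n) :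
    μ univ = μ s := by
  have null_compl : μ sᶜ = 0 := by
    obtain ⟨a, rfl⟩ := hμ
    simp only [Measure.finsetSum_apply, Measure.smul_apply, hs, smul_zero, Finset.sum_const_zero]
  exact (measure_congr (ae_eq_univ.2 null_compl)).symm

theorem VagueTendsto.tendsto_vagueTop {ρ : ℕ → Measure ℝ} (h : VagueTendsto ρ ν) :
    Tendsto ρ atTop (@nhds _ vagueTop ν) := by
  unfold vagueTop
  simp only [nhds_iInf, nhds_induced, tendsto_iInf, tendsto_comap_iff]
  exact h

theorem VagueTendsto.mem_coneUInf {ρ : ℕ → Measure ℝ} (h : VagueTendsto ρ ν)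
    (hρ : ∀ k, ∃ n, ρ k ∈ coneU μs n) : ν ∈ coneUInf μs :=
  letI := vagueTop
  mem_closure_of_tendsto h.tendsto_vagueTop (.of_forall fun k => mem_iUnion.2 (hρ k))

end Cones

section Value

variable {b : ℝ → ℝ} {t0 : ℝ}

theorem pVal_anti (b : ℝ → ℝ) (t0 x0 : ℝ) : Antitone (pVal b t0 x0) := fun _ _ hUV =>
  biInf_mono fun _ hμ => ⟨hUV hμ.1, hμ.2⟩

theorem antitone_pVal_coneU (b : ℝ → ℝ) (t0 x0 : ℝ) (μs : ℕ → Measure ℝ) :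
    Antitone fun n => pVal b t0 x0 (coneU μs (n + 1)) := fun _ _ hmn =>
  pVal_anti b t0 x0 (coneU_mono μs (Nat.succ_le_succ hmn))

theorem pVal_le_gInt {U : Set (Measure ℝ)} {μ : Measure ℝ} (hμ : μ ∈ feasSet b t0 U) (x0 : ℝ) :
    pVal b t0 x0 U ≤ gInt t0 x0 μ :=
  iInf₂_le μ hμ

theorem rMu_add_smul (μ ρ : Measure ℝ) (c : ℝ≥0) (t x : ℝ) :
    rMu (μ + c • ρ) t x = rMu μ t x + c * rMu ρ t x := by
  rw [rMu, lintegral_add_measure, lintegral_smul_measure]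
  rfl

end Value

section BoundaryGap

variable {b : ℝ → ℝ} {t0 : ℝ} {μ ν ρ : Measure ℝ}

/-- The largest deviation `|r_μ - r_ν|` along the curve `b` on `(0, t0]`, measured relative to
`r_ρ`. As subtraction in `ℝ≥0∞` truncates, the absolute value is the sum of both differences. -/
noncomputable def relBoundaryGap (b : ℝ → ℝ) (t0 : ℝ) (ρ μ ν : Measure ℝ) : ℝ≥0∞ :=
  ⨆ t ∈ Ioc 0 t0,
    ((rMu μ t (b t) - rMu ν t (b t)) + (rMu ν t (b t) - rMu μ t (b t))) / rMu ρ t (b t)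

theorem rMu_le_add_relBoundaryGap_mul (hgap : relBoundaryGap b t0 ρ μ ν ≠ ⊤) [IsFiniteMeasure ρ]
    {t : ℝ} (ht : t ∈ Ioc 0 t0) :
    rMu μ t (b t) ≤ rMu ν t (b t) + relBoundaryGap b t0 ρ μ ν * rMu ρ t (b t) := by
  rw [← tsub_le_iff_left, ← ENNReal.div_le_iff_le_mul (.inr hgap) (.inl (rMu_lt_top ρ ht.1 _).ne)]
  exact (ENNReal.div_le_div_right le_self_add _).trans (le_iSup₂_of_le t ht le_rfl)

theorem pVal_coneU_le_gInt_add {μs : ℕ → Measure ℝ} [IsFiniteMeasure (μs 0)] {n : ℕ} (hn : 0 < n)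
    (hμ : ∀ t ∈ Ioc 0 t0, 1 ≤ rMu μ t (b t)) (hν : ν ∈ coneU μs n)
    (hgap : relBoundaryGap b t0 (μs 0) μ ν ≠ ⊤) (x0 : ℝ) :
    pVal b t0 x0 (coneU μs n) ≤
      gInt t0 x0 ν + relBoundaryGap b t0 (μs 0) μ ν * gInt t0 x0 (μs 0) := by
  lift relBoundaryGap b t0 (μs 0) μ ν to ℝ≥0 using hgap with c hc
  have feasible : ν + c • μs 0 ∈ feasSet b t0 (coneU μs n) := by
    refine ⟨add_mem_coneU hν (smul_mem_coneU hn c), fun t ht => (hμ t ht).trans ?_⟩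
    rw [rMu_add_smul, hc]
    exact rMu_le_add_relBoundaryGap_mul (hc ▸ ENNReal.coe_ne_top) ht
  exact (pVal_le_gInt feasible x0).trans_eq (rMu_add_smul _ _ _ _ _)

theorem iInf_pVal_coneU_le_gInt {μs ξ : ℕ → Measure ℝ} [∀ i, IsFiniteMeasure (μs i)] {K : ℝ≥0∞}
    (ht0 : 0 < t0) (hμ : ∀ t ∈ Ioc 0 t0, 1 ≤ rMu μ t (b t)) (hξ : ∀ n, ξ n ∈ coneU μs (n + 1))
    (hK : K ≠ ⊤) (hξK : ∀ n, ξ n univ ≤ K) (hξμ : VagueTendsto ξ μ)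
    (hgap : Tendsto (fun n => relBoundaryGap b t0 (μs 0) μ (ξ n)) atTop (𝓝 0)) (x0 : ℝ) :
    ⨅ n, pVal b t0 x0 (coneU μs (n + 1)) ≤ gInt t0 x0 μ := by
  have := fun n => isFiniteMeasure_of_mem_coneU (hξ n)
  have correction_tendsto :
      Tendsto (fun n => relBoundaryGap b t0 (μs 0) μ (ξ n) * gInt t0 x0 (μs 0)) atTop (𝓝 0) := by
    have lim := ENNReal.Tendsto.mul_const hgap (.inr (rMu_lt_top (μs 0) ht0 x0).ne)
    rwa [zero_mul] at lim
  calc ⨅ n, pVal b t0 x0 (coneU μs (n + 1))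
      ≤ limsup (fun n => gInt t0 x0 (ξ n) +
          relBoundaryGap b t0 (μs 0) μ (ξ n) * gInt t0 x0 (μs 0)) atTop := by
        refine le_limsup_of_frequently_le (Eventually.frequently ?_)
        filter_upwards [hgap.eventually_ne ENNReal.zero_ne_top] with n hn
        exact (iInf_le _ n).trans (pVal_coneU_le_gInt_add n.succ_pos hμ (hξ n) hn x0)
    _ = limsup (fun n => gInt t0 x0 (ξ n)) atTop :=
        ENNReal.limsup_add_of_right_tendsto_zero correction_tendsto _
    _ ≤ gInt t0 x0 μ := hξμ.limsup_rMu_le_of_measure_univ_le hK hξK ht0 x0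

end BoundaryGap

section Convergence

variable {b : ℝ → ℝ} {t0 x0 : ℝ} {μs : ℕ → Measure ℝ} [∀ i, IsFiniteMeasure (μs i)]

theorem exists_subseq_optimizers_vagueTendsto (ht0 : 0 < t0)
    (hb : DifferentiableWithinAt ℝ b (Iio t0) t0) {μstar : ℕ → Measure ℝ}
    (hfeas : ∀ n, μstar n ∈ feasSet b t0 (coneU μs (n + 1)))
    (hopt : ∀ n, gInt t0 x0 (μstar n) = pVal b t0 x0 (coneU μs (n + 1))) :
    ∃ (φ : ℕ → ℕ) (ν : Measure ℝ), StrictMono φ ∧ VagueTendsto (μstar ∘ φ) ν ∧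
      ν ∈ feasSet b t0 (coneUInf μs) ∧
      gInt t0 x0 ν ≤ ⨅ n, pVal b t0 x0 (coneU μs (n + 1)) := by
  have finite_optimizer := fun n => isFiniteMeasure_of_mem_coneU (hfeas n).1
  have gInt_ne_top : gInt t0 x0 (μstar 0) ≠ ⊤ := (rMu_lt_top (μstar 0) ht0 x0).ne
  have gInt_le : ∀ n, gInt t0 x0 (μstar n) ≤ gInt t0 x0 (μstar 0) := fun n => by
    simpa only [hopt] using antitone_pVal_coneU b t0 x0 μs n.zero_le
  obtain ⟨φ, ν, hφ, _, hν⟩ := exists_subseq_vagueTendsto_of_gInt_le gInt_ne_top gInt_le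
  have (k : ℕ) : IsFiniteMeasure ((μstar ∘ φ) k) := finite_optimizer (φ k)
  refine ⟨φ, ν, hφ, hν, ⟨hν.mem_coneUInf fun k => ⟨_, (hfeas (φ k)).1⟩,
    hν.one_le_rMu ht0 hb gInt_ne_top (fun k => gInt_le (φ k)) fun k => (hfeas (φ k)).2⟩, ?_⟩
  refine (hν.gInt_le_liminf t0 x0).trans_eq (Tendsto.liminf_eq ?_)
  simp only [Function.comp_apply, hopt]
  exact (tendsto_atTop_iInf (antitone_pVal_coneU b t0 x0 μs)).comp hφ.tendsto_atTop

end Convergence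

theorem stmt_17_general {b : ℝ → ℝ} {t0 : ℝ} (x0 : ℝ) (ht0 : 0 < t0)
    (hb : DifferentiableWithinAt ℝ b (Iio t0) t0) {S : Set ℝ} {μs : ℕ → Measure ℝ}
    (hfin : ∀ i, IsFiniteMeasure (μs i)) (hsupp : ∀ i, μs i Sᶜ = 0) {μstar : ℕ → Measure ℝ}
    (hμstar : ∀ n : ℕ, 1 ≤ n → μstar n ∈ feasSet b t0 (coneU μs n) ∧
      gInt t0 x0 (μstar n) = pVal b t0 x0 (coneU μs n)) :
    ∃ (nk : ℕ → ℕ) (νInf : Measure ℝ), StrictMono nk ∧ (∀ k, 1 ≤ nk k) ∧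
      νInf ∈ coneUInf μs ∧ (∀ t ∈ Ioc 0 t0, 1 ≤ rMu νInf t (b t)) ∧
      VagueTendsto (fun k => μstar (nk k)) νInf ∧
      pVal b t0 x0 (coneUInf μs) ≤ gInt t0 x0 νInf ∧
      gInt t0 x0 νInf ≤ ⨅ n : ℕ, pVal b t0 x0 (coneU μs (n + 1)) ∧
      Tendsto (fun n : ℕ => pVal b t0 x0 (coneU μs (n + 1))) atTop
        (𝓝 (⨅ n : ℕ, pVal b t0 x0 (coneU μs (n + 1)))) ∧
      ∀ (ξ : ℕ → Measure ℝ) (μInfStar : Measure ℝ),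
        (∀ n : ℕ, 1 ≤ n → ξ n ∈ coneU μs n) →
        (⨆ n : ℕ, ξ n S) < ⊤ →
        VagueTendsto ξ μInfStar →
        μInfStar ∈ feasSet b t0 (coneUInf μs) →
        gInt t0 x0 μInfStar = pVal b t0 x0 (coneUInf μs) →
        Tendsto (fun n => relBoundaryGap b t0 (μs 0) μInfStar (ξ n)) atTop (𝓝 0) →
        gInt t0 x0 νInf = pVal b t0 x0 (coneUInf μs) ∧
          pVal b t0 x0 (coneUInf μs) = ⨅ n : ℕ, pVal b t0 x0 (coneU μs (n + 1)) := by
  have optimizer := fun n => hμstar (n + 1) n.succ_pos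
  obtain ⟨φ, ν, hφ, hν, ν_feasible, gInt_le⟩ := exists_subseq_optimizers_vagueTendsto ht0 hb
    (fun n => (optimizer n).1) (fun n => (optimizer n).2)
  have le_gInt := pVal_le_gInt ν_feasible x0
  refine ⟨fun k => φ k + 1, ν, hφ.add_const 1, fun k => (φ k).succ_pos, ν_feasible.1,
    ν_feasible.2, hν, le_gInt, gInt_le, tendsto_atTop_iInf (antitone_pVal_coneU b t0 x0 μs), ?_⟩
  intro ξ μI hξ hmass hξμ hμI hμI_opt hgap
  have iInf_le : ⨅ n, pVal b t0 x0 (coneU μs (n + 1)) ≤ pVal b t0 x0 (coneUInf μs) :=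
    hμI_opt ▸ iInf_pVal_coneU_le_gInt ht0 hμI.2 (fun n => hξ (n + 1) n.succ_pos) hmass.ne
      (fun n => (measure_univ_eq_of_mem_coneU hsupp (hξ (n + 1) n.succ_pos)).trans_le
        (le_iSup (ξ · S) (n + 1)))
      (fun f hf hfc => (hξμ f hf hfc).comp (tendsto_add_atTop_nat 1))
      (hgap.comp (tendsto_add_atTop_nat 1)) x0
  exact ⟨(gInt_le.trans iInf_le).antisymm le_gInt, (le_gInt.trans gInt_le).antisymm iInf_le⟩

theorem stmt_17 (b : ℝ → ℝ)
    (hba : AnalyticOnNhd ℝ b (Set.Ici 0)) (hbconc : ConcaveOn ℝ (Set.Ici 0) b)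
    (hb0 : 0 < b 0) (hbderiv : ∃ d : ℝ, HasDerivWithinAt b d (Set.Ici 0) 0)
    (t0 x0 : ℝ) (ht0 : 0 < t0) (hx0 : x0 < b t0)
    (μs : ℕ → Measure ℝ) (hfin : ∀ i, IsFiniteMeasure (μs i))
    (hsupp : ∀ i, μs i (Set.Ici (2 * b 0))ᶜ = 0)
    (C : ℝ≥0) (hC : 0 < C)
    (hCfeas : ∀ t ∈ Set.Ioc 0 t0, 1 ≤ rMu (C • μs 0) t (b t))
    -- a sequence of optimisers `μ*_{2,n}` of the discretised programs
    (μstar : ℕ → Measure ℝ)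
    (hμstar : ∀ n : ℕ, 1 ≤ n → μstar n ∈ feasSet b t0 (coneU μs n) ∧
      gInt t0 x0 (μstar n) = pVal b t0 x0 (coneU μs n)) :
    ∃ (nk : ℕ → ℕ) (νInf : Measure ℝ), StrictMono nk ∧ (∀ k, 1 ≤ nk k) ∧
      -- (b)
      νInf ∈ coneUInf μs ∧ (∀ t ∈ Set.Ioc 0 t0, 1 ≤ rMu νInf t (b t)) ∧
      VagueTendsto (fun k => μstar (nk k)) νInf ∧
      pVal b t0 x0 (coneUInf μs) ≤ gInt t0 x0 νInf ∧
      gInt t0 x0 νInf ≤ (⨅ n : ℕ, pVal b t0 x0 (coneU μs (n + 1))) ∧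
      Tendsto (fun n : ℕ => pVal b t0 x0 (coneU μs (n + 1))) atTop
        (𝓝 (⨅ n : ℕ, pVal b t0 x0 (coneU μs (n + 1)))) ∧
      -- (c)
      (∀ (ξ : ℕ → Measure ℝ) (μInfStar : Measure ℝ),
        (∀ n : ℕ, 1 ≤ n → ξ n ∈ coneU μs n) →
        (⨆ n : ℕ, ξ n (Set.Ici (2 * b 0))) < ⊤ →
        VagueTendsto ξ μInfStar →
        μInfStar ∈ feasSet b t0 (coneUInf μs) →
        gInt t0 x0 μInfStar = pVal b t0 x0 (coneUInf μs) →
        Tendsto (fun n : ℕ => ⨆ t ∈ Set.Ioc 0 t0,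
            ((rMu μInfStar t (b t) - rMu (ξ n) t (b t))
              + (rMu (ξ n) t (b t) - rMu μInfStar t (b t))) / rMu (μs 0) t (b t))
          atTop (𝓝 0) →
        (gInt t0 x0 νInf = pVal b t0 x0 (coneUInf μs) ∧
          pVal b t0 x0 (coneUInf μs) = ⨅ n : ℕ, pVal b t0 x0 (coneU μs (n + 1)))) :=
  stmt_17_general x0 ht0 (hba t0 ht0.le).differentiableAt.differentiableWithinAt hfin hsupp hμstar
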